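/- Let $X_1, \dots, X_n$ be a martingale difference sequence adapted to a filtration with $|X_k| \le R$ almost surely, and let $W_n = \sum_{k=1}^n \mathbb{E}[X_k^2 \mid \mathcal{F}_{k-1}]$ satisfy $W_n \le \sigma^2$ deterministically. Then for any integer $m \ge 1$, with probability at least $1 - \delta$, $\left|\sum_{k=1}^n X_k\right| \le \sqrt{8 \max\{W_n, \sigma^2/2^m\} \log(2m/\delta)} + \frac{4}{3} R \log(2m/\delta)$. -/

import Mathlib

open MeasureTheory ProbabilityTheory

/-!
Since `exp x ≤ 1 + x + x ^ 2` for `|x| ≤ 1`, a centred variable with `|X| ≤ 1` satisfies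
`E[exp X | m] ≤ exp E[X ^ 2 | m]`. Hence, for martingale differences bounded by `1` with partial
sums `S` and predictable quadratic variation `V`, the process `exp (S - V)` is a supermartingale
with mean at most `1`. Rescaling the differences by `c` and applying Markov's inequality gives
`c S - c ^ 2 V < L` outside an event of probability at most `exp (-L)`; optimising over `c` yields
Freedman's inequality on the event `V ≤ v`. As the optimal `c` depends on `v`, the random value of
`V` is captured by a union bound over the `m` dyadic levels `v = s / 2 ^ j`, which costs a factor
of `2` in `v`.
-/

lemma exists_lt_le_div_two_pow_le_two_mul_max {w s : ℝ} (hw : w ≤ s) {m : ℕ} (hm : 1 ≤ m) :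
    ∃ j < m, w ≤ s / 2 ^ j ∧ s / 2 ^ j ≤ 2 * max w (s / 2 ^ m) := by
  have level_le (k : ℕ) : s / 2 ^ k ≤ 2 * max w (s / 2 ^ (k + 1)) :=
    calc s / 2 ^ k = 2 * (s / 2 ^ (k + 1)) := by rw [pow_succ]; field_simp
      _ ≤ 2 * max w (s / 2 ^ (k + 1)) := by gcongr; exact le_max_right _ _
  induction m, hm using Nat.le_induction with
  | base => exact ⟨0, one_pos, by simpa using hw, level_le 0⟩
  | succ m _ ih =>
    rcases le_or_gt w (s / 2 ^ m) with hwm | hwm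
    · exact ⟨m, m.lt_succ_self, hwm, level_le m⟩
    · obtain ⟨j, hjm, hwj, hj⟩ := ih
      refine ⟨j, hjm.trans m.lt_succ_self, hwj, hj.trans ?_⟩
      rw [max_eq_left hwm.le]
      gcongr
      exact le_max_left _ _

lemma exists_pos_le_mul_sub_sq_mul {R v L : ℝ} (hR : 0 < R) (hv : 0 ≤ v) (hL : 0 < L) :
    ∃ c : ℝ, 0 < c ∧ c * R ≤ 1 ∧ L ≤ c * (√(4 * v * L) + R * L) - c ^ 2 * v := by
  obtain ⟨a, ha, rfl⟩ : ∃ a : ℝ, 0 ≤ a ∧ a ^ 2 = v := ⟨√v, v.sqrt_nonneg, Real.sq_sqrt hv⟩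
  obtain ⟨b, hb, rfl⟩ : ∃ b : ℝ, 0 < b ∧ b ^ 2 = L :=
    ⟨√L, Real.sqrt_pos.2 hL, Real.sq_sqrt hL.le⟩
  have hsqrt : √(4 * a ^ 2 * b ^ 2) = 2 * a * b := by
    rw [show 4 * a ^ 2 * b ^ 2 = (2 * a * b) ^ 2 by ring, Real.sqrt_sq (by positivity)]
  have hden : 0 < a + R * b := by positivity
  -- `b / a` maximises `c * (2 * a * b) - c ^ 2 * a ^ 2`; the summand `R * b` enforces `c * R ≤ 1`.
  refine ⟨b / (a + R * b), by positivity, ?_, ?_⟩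
  · rw [div_mul_eq_mul_div, div_le_one hden]
    linarith
  · rw [hsqrt, ← sub_nonneg]
    have gap_eq : b / (a + R * b) * (2 * a * b + R * b ^ 2) - (b / (a + R * b)) ^ 2 * a ^ 2 - b ^ 2
        = a * R * b ^ 3 / (a + R * b) ^ 2 := by
      field_simp
      ring
    rw [gap_eq]
    positivity

section CondExp

variable {Ω : Type*} {m m0 : MeasurableSpace Ω} {μ : Measure Ω}

lemma memLp_top_exp_sub_condExp_sq {X : Ω → ℝ} (hX : AEStronglyMeasurable X μ)
    (hX1 : ∀ᵐ ω ∂μ, |X ω| ≤ 1) : MemLp (fun ω ↦ Real.exp (X ω - μ[X ^ 2 | m] ω)) ⊤ μ := by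
  refine memLp_top_of_bound (Real.continuous_exp.comp_aestronglyMeasurable
    (hX.sub integrable_condExp.aestronglyMeasurable)) (Real.exp 1) ?_
  have condExp_sq_nonneg : 0 ≤ᵐ[μ] μ[X ^ 2 | m] := condExp_nonneg (ae_of_all _ fun ω ↦ sq_nonneg _)
  filter_upwards [hX1, condExp_sq_nonneg] with ω hω hsq
  rw [Real.norm_eq_abs, Real.abs_exp, Real.exp_le_exp]
  exact (sub_le_self _ hsq).trans (abs_le.1 hω).2

variable [IsFiniteMeasure μ]

lemma integrable_exp_of_abs_le_one {X : Ω → ℝ} (hX : AEStronglyMeasurable X μ)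
    (hX1 : ∀ᵐ ω ∂μ, |X ω| ≤ 1) : Integrable (fun ω ↦ Real.exp (X ω)) μ := by
  refine .of_bound (Real.continuous_exp.comp_aestronglyMeasurable hX) (Real.exp 1) ?_
  filter_upwards [hX1] with ω hω
  rw [Real.norm_eq_abs, Real.abs_exp, Real.exp_le_exp]
  exact (abs_le.1 hω).2

lemma condExp_exp_le_exp_condExp_sq {X : Ω → ℝ} (hm : m ≤ m0) (hX : AEStronglyMeasurable X μ)
    (hX1 : ∀ᵐ ω ∂μ, |X ω| ≤ 1) (hX0 : μ[X | m] =ᵐ[μ] 0) :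
    μ[fun ω ↦ Real.exp (X ω) | m] ≤ᵐ[μ] fun ω ↦ Real.exp (μ[X ^ 2 | m] ω) := by
  have hXtop : MemLp X ⊤ μ := memLp_top_of_bound hX 1 hX1
  have hXint : Integrable X μ := hXtop.integrable le_top
  have hXsq : Integrable (X ^ 2) μ := (hXtop.mono_exponent le_top).integrable_sq
  have hone : Integrable (1 : Ω → ℝ) μ := integrable_const 1
  have hquad : Integrable (1 + X + X ^ 2) μ := (hone.add hXint).add hXsq
  have exp_le : (fun ω ↦ Real.exp (X ω)) ≤ᵐ[μ] 1 + X + X ^ 2 := by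
    filter_upwards [hX1] with ω hω
    have := (abs_le.1 (Real.abs_exp_sub_one_sub_id_le hω)).2
    simp only [Pi.add_apply, Pi.one_apply, Pi.pow_apply]
    linarith
  have condExp_quad : μ[1 + X + X ^ 2 | m] =ᵐ[μ] fun ω ↦ 1 + μ[X ^ 2 | m] ω := by
    have condExp_one : μ[(1 : Ω → ℝ) | m] = 1 := condExp_const hm 1
    filter_upwards [condExp_add (hone.add hXint) hXsq m, condExp_add hone hXint m, hX0]
      with ω hadd_sq hadd hzero
    rw [hadd_sq, Pi.add_apply, hadd, Pi.add_apply, condExp_one, hzero, Pi.one_apply,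
      Pi.zero_apply, add_zero]
  filter_upwards [condExp_mono (integrable_exp_of_abs_le_one hX hX1) hquad exp_le, condExp_quad]
    with ω hle heq
  calc μ[fun ω ↦ Real.exp (X ω) | m] ω ≤ 1 + μ[X ^ 2 | m] ω := hle.trans_eq heq
    _ ≤ Real.exp (μ[X ^ 2 | m] ω) := by
      rw [add_comm]
      exact Real.add_one_le_exp _

lemma condExp_exp_sub_condExp_sq_le_one {X : Ω → ℝ} (hm : m ≤ m0) (hX : AEStronglyMeasurable X μ)
    (hX1 : ∀ᵐ ω ∂μ, |X ω| ≤ 1) (hX0 : μ[X | m] =ᵐ[μ] 0) :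
    μ[fun ω ↦ Real.exp (X ω - μ[X ^ 2 | m] ω) | m] ≤ᵐ[μ] 1 := by
  set V := μ[X ^ 2 | m]
  have exp_sub_eq : (fun ω ↦ Real.exp (X ω - V ω))
      = (fun ω ↦ Real.exp (X ω)) * fun ω ↦ Real.exp (-V ω) := by
    ext ω
    rw [Pi.mul_apply, ← Real.exp_add, sub_eq_add_neg]
  have hprod := (memLp_top_exp_sub_condExp_sq (m := m) hX hX1).integrable le_top
  rw [exp_sub_eq] at hprod ⊢
  have hV : StronglyMeasurable[m] fun ω ↦ Real.exp (-V ω) :=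
    Real.continuous_exp.comp_stronglyMeasurable stronglyMeasurable_condExp.neg
  filter_upwards [condExp_mul_of_stronglyMeasurable_right hV hprod
    (integrable_exp_of_abs_le_one hX hX1), condExp_exp_le_exp_condExp_sq hm hX hX1 hX0]
    with ω hpull hle
  rw [hpull, Pi.mul_apply]
  calc μ[fun ω ↦ Real.exp (X ω) | m] ω * Real.exp (-V ω)
      ≤ Real.exp (V ω) * Real.exp (-V ω) := by gcongr
    _ = 1 := by rw [← Real.exp_add, add_neg_cancel, Real.exp_zero]

end CondExp

section Martingale

variable {Ω : Type*} {m0 : MeasurableSpace Ω} {μ : Measure Ω} {ℱ : Filtration ℕ m0}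

lemma supermartingale_prod_range [IsFiniteMeasure μ] {Z : ℕ → Ω → ℝ}
    (hmeas : ∀ k, StronglyMeasurable[ℱ (k + 1)] (Z k)) (hnonneg : ∀ k, 0 ≤ᵐ[μ] Z k)
    (htop : ∀ k, MemLp (Z k) ⊤ μ) (hone : ∀ k, μ[Z k | ℱ k] ≤ᵐ[μ] 1) :
    Supermartingale (fun n ↦ ∏ k ∈ Finset.range n, Z k) ℱ μ := by
  have prod_meas (n : ℕ) : StronglyMeasurable[ℱ n] (∏ k ∈ Finset.range n, Z k) :=
    Finset.stronglyMeasurable_prod _ fun k hk ↦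
      (hmeas k).mono (ℱ.mono (Finset.mem_range.1 hk))
  have prod_integrable (n : ℕ) : Integrable (∏ k ∈ Finset.range n, Z k) μ := by
    have prod_top : MemLp (∏ k ∈ Finset.range n, Z k) ⊤ μ := by
      simpa using MemLp.prod (s := Finset.range n) fun k _ ↦ htop k
    exact prod_top.integrable le_top
  refine supermartingale_nat prod_meas prod_integrable fun n ↦ ?_
  have hsucc := prod_integrable (n + 1)
  rw [Finset.prod_range_succ] at hsucc ⊢
  filter_upwards [condExp_mul_of_stronglyMeasurable_left (prod_meas n) hsucc
    ((htop n).integrable le_top), hone n, ae_all_iff.2 hnonneg] with ω hpull hle hω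
  rw [hpull, Pi.mul_apply]
  refine mul_le_of_le_one_right ?_ hle
  rw [Finset.prod_apply]
  exact Finset.prod_nonneg fun k _ ↦ hω k

/-- The predictable quadratic variation `∑_{k < n} E[Y k ^ 2 | ℱ k]` of a sequence of martingale
differences, where the increment `Y k` takes time `k` to time `k + 1`. -/
noncomputable def predictableVariation (μ : Measure Ω) (ℱ : Filtration ℕ m0) (Y : ℕ → Ω → ℝ)
    (n : ℕ) (ω : Ω) : ℝ :=
  ∑ k ∈ Finset.range n, μ[Y k ^ 2 | ℱ k] ω

/-- `Y` is a sequence of martingale differences for `ℱ`, each almost surely bounded by `R`. The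
increment `Y k` takes time `k` to time `k + 1`, so it corresponds to `X (k + 1)` for differences
indexed from `1`. -/
structure IsBoundedMartingaleDiff (μ : Measure Ω) (ℱ : Filtration ℕ m0) (R : ℝ)
    (Y : ℕ → Ω → ℝ) : Prop where
  stronglyMeasurable (k : ℕ) : StronglyMeasurable[ℱ (k + 1)] (Y k)
  condExp_eq_zero (k : ℕ) : μ[Y k | ℱ k] =ᵐ[μ] 0
  abs_le (k : ℕ) : ∀ᵐ ω ∂μ, |Y k ω| ≤ R

lemma predictableVariation_neg (Y : ℕ → Ω → ℝ) :
    predictableVariation μ ℱ (-Y) = predictableVariation μ ℱ Y := by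
  ext n ω
  simp only [predictableVariation, Pi.neg_apply, neg_sq]

lemma predictableVariation_smul (c : ℝ) (Y : ℕ → Ω → ℝ) (n : ℕ) :
    predictableVariation μ ℱ (c • Y) n =ᵐ[μ] c ^ 2 • predictableVariation μ ℱ Y n := by
  have hsmul : ∀ᵐ ω ∂μ, ∀ k, μ[(c • Y k) ^ 2 | ℱ k] ω = c ^ 2 * μ[Y k ^ 2 | ℱ k] ω :=
    ae_all_iff.2 fun k ↦ by
      rw [smul_pow]
      exact condExp_smul (c ^ 2) (Y k ^ 2) (ℱ k)
  filter_upwards [hsmul] with ω hω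
  simp only [predictableVariation, Pi.smul_apply, smul_eq_mul, hω, Finset.mul_sum]

namespace IsBoundedMartingaleDiff

variable {R : ℝ} {Y : ℕ → Ω → ℝ}

lemma aestronglyMeasurable (hY : IsBoundedMartingaleDiff μ ℱ R Y) (k : ℕ) :
    AEStronglyMeasurable (Y k) μ :=
  ((hY.stronglyMeasurable k).mono (ℱ.le _)).aestronglyMeasurable

lemma smul (hY : IsBoundedMartingaleDiff μ ℱ R Y) (c : ℝ) :
    IsBoundedMartingaleDiff μ ℱ (|c| * R) (c • Y) where
  stronglyMeasurable k := (hY.stronglyMeasurable k).const_smul c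
  condExp_eq_zero k := by
    filter_upwards [condExp_smul c (Y k) (ℱ k), hY.condExp_eq_zero k] with ω hsmul hzero
    rw [Pi.smul_apply, hsmul, Pi.smul_apply, hzero, Pi.zero_apply, smul_zero]
  abs_le k := by
    filter_upwards [hY.abs_le k] with ω hω
    rw [Pi.smul_apply, Pi.smul_apply, smul_eq_mul, abs_mul]
    gcongr

lemma neg (hY : IsBoundedMartingaleDiff μ ℱ R Y) : IsBoundedMartingaleDiff μ ℱ R (-Y) := by
  simpa using hY.smul (-1)

lemma mono {R' : ℝ} (hY : IsBoundedMartingaleDiff μ ℱ R Y) (hR : R ≤ R') :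
    IsBoundedMartingaleDiff μ ℱ R' Y where
  __ := hY
  abs_le k := (hY.abs_le k).mono fun _ hω ↦ hω.trans hR

lemma nonneg [NeZero μ] (hY : IsBoundedMartingaleDiff μ ℱ R Y) : 0 ≤ R :=
  let ⟨_, hω⟩ := (hY.abs_le 0).exists
  (abs_nonneg _).trans hω

lemma sum_ae_eq_zero (hY : IsBoundedMartingaleDiff μ ℱ 0 Y) (n : ℕ) :
    ∀ᵐ ω ∂μ, ∑ k ∈ Finset.range n, Y k ω = 0 := by
  filter_upwards [ae_all_iff.2 hY.abs_le] with ω hω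
  exact Finset.sum_eq_zero fun k _ ↦ abs_nonpos_iff.1 (hω k)

lemma supermartingale_exp_sum_sub_predictableVariation [IsFiniteMeasure μ]
    (hY : IsBoundedMartingaleDiff μ ℱ 1 Y) :
    Supermartingale (fun n ω ↦ Real.exp
      (∑ k ∈ Finset.range n, Y k ω - predictableVariation μ ℱ Y n ω)) ℱ μ := by
  have hprod : Supermartingale (fun n ↦ ∏ k ∈ Finset.range n,
      fun ω ↦ Real.exp (Y k ω - μ[Y k ^ 2 | ℱ k] ω)) ℱ μ :=
    supermartingale_prod_range
      (fun k ↦ Real.continuous_exp.comp_stronglyMeasurable <| (hY.stronglyMeasurable k).sub <|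
        stronglyMeasurable_condExp.mono (ℱ.mono k.le_succ))
      (fun k ↦ ae_of_all _ fun ω ↦ (Real.exp_pos _).le)
      (fun k ↦ memLp_top_exp_sub_condExp_sq (hY.aestronglyMeasurable k) (hY.abs_le k))
      (fun k ↦ condExp_exp_sub_condExp_sq_le_one (ℱ.le k) (hY.aestronglyMeasurable k)
        (hY.abs_le k) (hY.condExp_eq_zero k))
  convert hprod using 3 with n ω
  rw [Finset.prod_apply, ← Real.exp_sum, Finset.sum_sub_distrib, predictableVariation]

variable [IsProbabilityMeasure μ]

lemma measureReal_le_sum_sub_predictableVariation_le (hY : IsBoundedMartingaleDiff μ ℱ 1 Y)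
    (n : ℕ) (L : ℝ) :
    μ.real {ω | L ≤ ∑ k ∈ Finset.range n, Y k ω - predictableVariation μ ℱ Y n ω} ≤
      Real.exp (-L) := by
  have hsuper := hY.supermartingale_exp_sum_sub_predictableVariation
  set D := fun n ω ↦ ∑ k ∈ Finset.range n, Y k ω - predictableVariation μ ℱ Y n ω with hD
  have mgf_le_one : mgf (D n) μ 1 ≤ 1 := by
    have := hsuper.setIntegral_le n.zero_le MeasurableSet.univ
    simpa [mgf, predictableVariation, hD] using this
  calc μ.real {ω | L ≤ D n ω} ≤ Real.exp (-1 * L) * mgf (D n) μ 1 :=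
        measure_ge_le_exp_mul_mgf L zero_le_one (by simpa using hsuper.integrable n)
    _ ≤ Real.exp (-L) := by
        rw [neg_one_mul]
        exact mul_le_of_le_one_right (Real.exp_pos _).le mgf_le_one

lemma measureReal_le_mul_sum_sub_sq_mul_predictableVariation_le
    (hY : IsBoundedMartingaleDiff μ ℱ R Y) {c : ℝ} (hc : |c| * R ≤ 1) (n : ℕ) (L : ℝ) :
    μ.real {ω | L ≤ c * ∑ k ∈ Finset.range n, Y k ω - c ^ 2 * predictableVariation μ ℱ Y n ω} ≤
      Real.exp (-L) := by
  refine le_of_eq_of_le (measureReal_congr (Filter.eventuallyEq_set.2 ?_))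
    (((hY.smul c).mono hc).measureReal_le_sum_sub_predictableVariation_le n L)
  filter_upwards [predictableVariation_smul (μ := μ) (ℱ := ℱ) c Y n] with ω hω
  simp only [hω, Pi.smul_apply, smul_eq_mul, Finset.mul_sum]

theorem measureReal_sum_gt_le (hY : IsBoundedMartingaleDiff μ ℱ R Y) (n : ℕ) {v L : ℝ}
    (hv : 0 ≤ v) (hL : 0 < L) :
    μ.real {ω | √(4 * v * L) + R * L < ∑ k ∈ Finset.range n, Y k ω ∧
      predictableVariation μ ℱ Y n ω ≤ v} ≤ Real.exp (-L) := by
  rcases hY.nonneg.eq_or_lt with rfl | hR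
  · refine le_of_eq_of_le ?_ (Real.exp_pos _).le
    rw [measureReal_eq_zero_iff, measure_eq_zero_iff_ae_notMem]
    filter_upwards [hY.sum_ae_eq_zero n] with ω hω ⟨hsum, _⟩
    rw [hω, zero_mul, add_zero] at hsum
    exact hsum.not_ge (Real.sqrt_nonneg _)
  · obtain ⟨c, hc, hcR, hcL⟩ := exists_pos_le_mul_sub_sq_mul hR hv hL
    refine (measureReal_mono ?_).trans
      (hY.measureReal_le_mul_sum_sub_sq_mul_predictableVariation_le
        (c := c) (by rwa [abs_of_pos hc]) n L)
    rintro ω ⟨hsum, hvar⟩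
    calc L ≤ c * (√(4 * v * L) + R * L) - c ^ 2 * v := hcL
      _ ≤ c * ∑ k ∈ Finset.range n, Y k ω - c ^ 2 * predictableVariation μ ℱ Y n ω := by gcongr

theorem measureReal_abs_sum_gt_le (hY : IsBoundedMartingaleDiff μ ℱ R Y) (n : ℕ) {v L : ℝ}
    (hv : 0 ≤ v) (hL : 0 < L) :
    μ.real {ω | √(4 * v * L) + R * L < |∑ k ∈ Finset.range n, Y k ω| ∧
      predictableVariation μ ℱ Y n ω ≤ v} ≤ 2 * Real.exp (-L) := by
  have hneg := hY.neg.measureReal_sum_gt_le n hv hL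
  simp only [Pi.neg_apply, Finset.sum_neg_distrib, predictableVariation_neg] at hneg
  rw [two_mul]
  refine (measureReal_mono ?_).trans <| (measureReal_union_le _ _).trans <|
    add_le_add (hY.measureReal_sum_gt_le n hv hL) hneg
  rintro ω ⟨hsum, hvar⟩
  exact (lt_abs.1 hsum).imp (⟨·, hvar⟩) (⟨·, hvar⟩)

theorem measureReal_abs_sum_gt_sqrt_max_le (hY : IsBoundedMartingaleDiff μ ℱ R Y) (n : ℕ)
    {s L : ℝ} (hs : 0 ≤ s) (hL : 0 < L) {m : ℕ} (hm : 1 ≤ m) :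
    μ.real {ω | √(8 * max (predictableVariation μ ℱ Y n ω) (s / 2 ^ m) * L) + R * L <
        |∑ k ∈ Finset.range n, Y k ω| ∧ predictableVariation μ ℱ Y n ω ≤ s} ≤
      2 * m * Real.exp (-L) := by
  set level := fun j : ℕ ↦ {ω | √(4 * (s / 2 ^ j) * L) + R * L < |∑ k ∈ Finset.range n, Y k ω| ∧
    predictableVariation μ ℱ Y n ω ≤ s / 2 ^ j}
  calc _ ≤ μ.real (⋃ j ∈ Finset.range m, level j) := measureReal_mono ?_ (measure_ne_top _ _)
    _ ≤ ∑ j ∈ Finset.range m, μ.real (level j) := measureReal_biUnion_finset_le _ _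
    _ ≤ ∑ j ∈ Finset.range m, 2 * Real.exp (-L) :=
        Finset.sum_le_sum fun j _ ↦ hY.measureReal_abs_sum_gt_le n (by positivity) hL
    _ = 2 * m * Real.exp (-L) := by
        rw [Finset.sum_const, Finset.card_range, nsmul_eq_mul]
        ring
  rintro ω ⟨hsum, hvar⟩
  obtain ⟨j, hjm, hvarj, hj⟩ := exists_lt_le_div_two_pow_le_two_mul_max hvar hm
  refine Set.mem_biUnion (Finset.mem_coe.2 (Finset.mem_range.2 hjm)) ⟨lt_of_le_of_lt ?_ hsum, hvarj⟩
  gcongr √(?_ * L) + _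
  linarith

end IsBoundedMartingaleDiff

end Martingale

lemma ofReal_one_sub_le_measure_of_measureReal_compl_le {Ω : Type*} {m0 : MeasurableSpace Ω}
    {μ : Measure Ω} [IsProbabilityMeasure μ] {A : Set Ω} {δ : ℝ} (hA : μ.real Aᶜ ≤ δ) :
    ENNReal.ofReal (1 - δ) ≤ μ A := by
  have hcover : 1 ≤ μ.real A + μ.real Aᶜ := by
    simpa only [Set.union_compl_self, probReal_univ] using measureReal_union_le (μ := μ) A Aᶜ
  rw [← ofReal_measureReal (s := A)]
  exact ENNReal.ofReal_le_ofReal (by linarith)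

lemma sum_Icc_one_eq_sum_range {M : Type*} [AddCommMonoid M] (f : ℕ → M) (n : ℕ) :
    ∑ k ∈ Finset.Icc 1 n, f k = ∑ k ∈ Finset.range n, f (k + 1) := by
  rw [Finset.range_eq_Ico, Finset.sum_Ico_add', zero_add, Finset.Ico_add_one_right_eq_Icc]

/-- Freedman's inequality (user-friendly form): for a martingale difference
sequence `X 1, …, X n` adapted to a filtration `ℱ`, with `|X k| ≤ R`
almost surely and predictable quadratic variation
`W n = ∑_{k=1}^n E[X k ^ 2 | ℱ (k-1)]` bounded deterministically by `σ²`,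
for any integer `m ≥ 1`, with probability at least `1 - δ`,
`|∑_{k=1}^n X k| ≤ √(8 max{W n, σ²/2^m} log(2m/δ)) + (4/3) R log(2m/δ)`. -/
theorem stmt_12 {Ω : Type*} {m0 : MeasurableSpace Ω}
    (μ : Measure Ω) [IsProbabilityMeasure μ]
    (ℱ : Filtration ℕ m0) (X : ℕ → Ω → ℝ) (n : ℕ)
    (R σ δ : ℝ) (hR : 0 ≤ R) (hσ : 0 ≤ σ) (hδ : 0 < δ) (hδ1 : δ < 1)
    (hadapted : Adapted ℱ X)
    (hmeas : ∀ k, Measurable (X k))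
    (hmds : ∀ k, 1 ≤ k → μ[X k | ℱ (k - 1)] =ᵐ[μ] 0)
    (hbdd : ∀ k, 1 ≤ k → ∀ᵐ ω ∂μ, |X k ω| ≤ R)
    (W : ℕ → Ω → ℝ)
    (hW : ∀ ω, W n ω = ∑ k ∈ Finset.Icc 1 n, (μ[(X k) ^ 2 | ℱ (k - 1)]) ω)
    (hWσ : ∀ ω, W n ω ≤ σ ^ 2)
    (m : ℕ) (hm : 1 ≤ m) :
    ENNReal.ofReal (1 - δ) ≤
      μ {ω | |∑ k ∈ Finset.Icc 1 n, X k ω| ≤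
        Real.sqrt (8 * max (W n ω) (σ ^ 2 / 2 ^ m) * Real.log (2 * m / δ)) +
          (4 / 3) * R * Real.log (2 * m / δ)} := by
  set L := Real.log (2 * m / δ)
  have hm' : (1 : ℝ) ≤ m := by exact_mod_cast hm
  have hL : 0 < L := Real.log_pos (by rw [lt_div_iff₀ hδ]; linarith)
  have hexp : 2 * m * Real.exp (-L) = δ := by
    rw [Real.exp_neg, Real.exp_log (by positivity)]
    field_simp
  have hX : IsBoundedMartingaleDiff μ ℱ R (fun k ↦ X (k + 1)) :=
    ⟨fun k ↦ (hadapted (k + 1)).stronglyMeasurable, fun k ↦ hmds (k + 1) k.succ_pos,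
      fun k ↦ hbdd (k + 1) k.succ_pos⟩
  have hWeq (ω : Ω) : W n ω = predictableVariation μ ℱ (fun k ↦ X (k + 1)) n ω :=
    (hW ω).trans (sum_Icc_one_eq_sum_range _ n)
  refine ofReal_one_sub_le_measure_of_measureReal_compl_le ?_
  rw [← hexp]
  refine (measureReal_mono ?_).trans
    (hX.measureReal_abs_sum_gt_sqrt_max_le n (sq_nonneg σ) hL hm)
  intro ω hω
  simp only [Set.mem_compl_iff, Set.mem_ofPred_eq, not_le, hWeq, sum_Icc_one_eq_sum_range] at hω
  refine ⟨lt_of_le_of_lt ?_ hω, hWeq ω ▸ hWσ ω⟩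
  gcongr
  linarith
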